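/- Integration of a controlled integrand against a controlled path: Let X = (x, 𝕏) be a p-rough path with control ω on [0,T], V and Ṽ Banach spaces, (y, y†) a V-valued rough path controlled by X, and (α, α†) an L(V,Ṽ)-valued rough path controlled by X, where α_s† ∈ L(W, L(V,Ṽ)) is identified with an element of L(W ⊗ V, Ṽ). Then there exists a continuous z : [0,T] → Ṽ with z_0 = 0 and a constant C > 0 such that |z_t − z_s − α_s(y_t − y_s) − α_s†((I_W ⊗ y_s†) 𝕏_{s,t})| ≤ C ω(s,t)^{3/p} for all 0 ≤ s ≤ t ≤ T. Moreover, setting z_s† := α_s ∘ y_s†, the pair (z, z†) is a Ṽ-valued rough path controlled by X. -/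

import Mathlib

noncomputable section

open scoped BigOperators

/-- `ℝ^n` with the Euclidean norm. -/
abbrev Euc (n : ℕ) : Type := EuclideanSpace ℝ (Fin n)

/-- The `i`-th standard basis vector of `ℝ^n`. -/
def eb {n : ℕ} (i : Fin n) : Euc n := EuclideanSpace.single i 1

/-- Tensor product of two Euclidean vectors, realized in `ℝ^{n×m}` with the Euclidean norm. -/
def tensorE {n m : ℕ} (v : Euc n) (w : Euc m) : EuclideanSpace ℝ (Fin n × Fin m) :=
  (EuclideanSpace.equiv (Fin n × Fin m) ℝ).symm fun p => v p.1 * w p.2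

/-- Application of the (unique) linear extension of a bilinear map `B` to a tensor
`X ∈ ℝ^n ⊗ ℝ^m ≅ ℝ^{n × m}`. -/
def tapply {n m : ℕ} {V : Type*} [NormedAddCommGroup V] [NormedSpace ℝ V]
    (B : Euc n → Euc m → V) (X : EuclideanSpace ℝ (Fin n × Fin m)) : V :=
  ∑ q : Fin n × Fin m, X q • B (eb q.1) (eb q.2)
/-- `ω` is a control on the simplex `{(s,t) : 0 ≤ s ≤ t ≤ T}`. -/
structure IsControl (T : ℝ) (ω : ℝ → ℝ → ℝ) : Prop where
  cont : ContinuousOn (fun q : ℝ × ℝ => ω q.1 q.2)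
    {q : ℝ × ℝ | 0 ≤ q.1 ∧ q.1 ≤ q.2 ∧ q.2 ≤ T}
  nonneg : ∀ ⦃s t : ℝ⦄, 0 ≤ s → s ≤ t → t ≤ T → 0 ≤ ω s t
  zero : ∀ ⦃s : ℝ⦄, 0 ≤ s → s ≤ T → ω s s = 0
  superadditive : ∀ ⦃s t u : ℝ⦄, 0 ≤ s → s ≤ t → t ≤ u → u ≤ T → ω s t + ω t u ≤ ω s u
/-- `(x, XX)` is a `p`-rough path with control `ω` on `[0,T]`. -/
structure IsRoughPath (T p : ℝ) {k : ℕ} (ω : ℝ → ℝ → ℝ)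
    (x : ℝ → Euc k) (XX : ℝ → ℝ → EuclideanSpace ℝ (Fin k × Fin k)) : Prop where
  cont_x : ContinuousOn x (Set.Icc 0 T)
  cont_XX : ContinuousOn (fun q : ℝ × ℝ => XX q.1 q.2)
    {q : ℝ × ℝ | 0 ≤ q.1 ∧ q.1 ≤ q.2 ∧ q.2 ≤ T}
  chen : ∀ ⦃s t u : ℝ⦄, 0 ≤ s → s ≤ t → t ≤ u → u ≤ T →
    XX s u = XX s t + XX t u + tensorE (x t - x s) (x u - x t)
  bound_x : ∀ ⦃s t : ℝ⦄, 0 ≤ s → s ≤ t → t ≤ T → ‖x t - x s‖ ≤ ω s t ^ (1 / p)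
  bound_XX : ∀ ⦃s t : ℝ⦄, 0 ≤ s → s ≤ t → t ≤ T → ‖XX s t‖ ≤ ω s t ^ (2 / p)
/-- `(y, y')` is a `V`-valued rough path controlled by `X = (x, ·)` (with control `ω`)
on the interval `[a, b]`. -/
def IsCRP (p : ℝ) {k : ℕ} (ω : ℝ → ℝ → ℝ) (x : ℝ → Euc k)
    {V : Type*} [NormedAddCommGroup V] [NormedSpace ℝ V]
    (a b : ℝ) (y : ℝ → V) (y' : ℝ → Euc k →L[ℝ] V) : Prop :=
  ContinuousOn y (Set.Icc a b) ∧ ContinuousOn y' (Set.Icc a b) ∧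
    ∃ C : ℝ, ∀ ⦃s t : ℝ⦄, a ≤ s → s ≤ t → t ≤ b →
      ‖y t - y s - y' s (x t - x s)‖ ≤ C * ω s t ^ (2 / p) ∧
      ‖y' t - y' s‖ ≤ C * ω s t ^ (1 / p)

/-!
The integral is built by sewing the germ `Ξ s t = α s (y t - y s) + α' s ((I ⊗ y' s) 𝕏 s t)`.
By Chen's identity the defect `Ξ s u - Ξ s t - Ξ t u` consists of products of increments of total
homogeneity `3 / p > 1` in `ω`. Young's argument then bounds Riemann sums of `Ξ` over an arbitrary
partition of `[s, t]` by the single germ up to `O(ω s t ^ (3 / p))`: a partition can be cut at an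
interval on either side of which the control is at most halved, and `2 * (1 / 2) ^ (3 / p) < 1`
makes the resulting recursion close. Applied inside each interval of a coarse partition, the same
bound shows that dyadic Riemann sums converge.
-/

/-! ### Controls -/

namespace IsControl

open Set

variable {T : ℝ} {ω : ℝ → ℝ → ℝ}

lemma mono (hω : IsControl T ω) {s s' t' t : ℝ} (hs : 0 ≤ s) (hss' : s ≤ s') (hst' : s' ≤ t')
    (htt' : t' ≤ t) (ht : t ≤ T) : ω s' t' ≤ ω s t := by
  have hleft := hω.superadditive hs hss' (hst'.trans htt') ht
  have hright := hω.superadditive (hs.trans hss') hst' htt' ht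
  linarith [hω.nonneg hs hss' (hst'.trans (htt'.trans ht)),
    hω.nonneg (hs.trans (hss'.trans hst')) htt' ht]

lemma rpow_mono (hω : IsControl T ω) {s s' t' t q : ℝ} (hs : 0 ≤ s) (hss' : s ≤ s')
    (hst' : s' ≤ t') (htt' : t' ≤ t) (ht : t ≤ T) (hq : 0 ≤ q) : ω s' t' ^ q ≤ ω s t ^ q :=
  Real.rpow_le_rpow (hω.nonneg (hs.trans hss') hst' (htt'.trans ht))
    (hω.mono hs hss' hst' htt' ht) hq

lemma rpow_add_le (hω : IsControl T ω) {s t a b : ℝ} (hs : 0 ≤ s) (hst : s ≤ t) (ht : t ≤ T)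
    (ha : 0 ≤ a) (hb : 0 ≤ b) : ω s t ^ (a + b) ≤ ω 0 T ^ a * ω s t ^ b := by
  have hnonneg := hω.nonneg hs hst ht
  rw [Real.rpow_add_of_nonneg hnonneg ha hb]
  gcongr
  exact hω.mono le_rfl hs hst ht le_rfl

lemma exists_forall_sub_lt_imp_lt (hω : IsControl T ω) {ε : ℝ} (hε : 0 < ε) :
    ∃ δ > 0, ∀ ⦃s t⦄, 0 ≤ s → s ≤ t → t ≤ T → t - s < δ → ω s t < ε := by
  have hcompact : IsCompact {q : ℝ × ℝ | 0 ≤ q.1 ∧ q.1 ≤ q.2 ∧ q.2 ≤ T} := by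
    refine ((isCompact_Icc (a := (0 : ℝ)) (b := T)).prod
      (isCompact_Icc (a := (0 : ℝ)) (b := T))).of_isClosed_subset ?_ ?_
    · exact (isClosed_le continuous_const continuous_fst).inter
        ((isClosed_le continuous_fst continuous_snd).inter
          (isClosed_le continuous_snd continuous_const))
    · exact fun q ⟨h0, h1, h2⟩ => ⟨⟨h0, h1.trans h2⟩, h0.trans h1, h2⟩
  obtain ⟨δ, hδ, hδω⟩ := Metric.uniformContinuousOn_iff.mp
    (hcompact.uniformContinuousOn_of_continuous hω.cont) ε hε
  refine ⟨δ, hδ, fun s t hs hst ht hlt => ?_⟩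
  have hdist : dist (s, t) (s, s) < δ := by
    simpa [Prod.dist_eq, Real.dist_eq, abs_of_nonneg (sub_nonneg.mpr hst), hδ] using hlt
  have := hδω (s, t) ⟨hs, hst, ht⟩ (s, s) ⟨hs, le_rfl, hst.trans ht⟩ hdist
  rw [Real.dist_eq, hω.zero hs (hst.trans ht), sub_zero] at this
  exact (le_abs_self _).trans_lt this

lemma continuousOn_of_norm_sub_le {E : Type*} [SeminormedAddCommGroup E] (hω : IsControl T ω)
    {f : ℝ → E} {C q : ℝ} (hq : 0 < q)
    (hf : ∀ ⦃s t⦄, 0 ≤ s → s ≤ t → t ≤ T → ‖f t - f s‖ ≤ C * ω s t ^ q) :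
    ContinuousOn f (Icc 0 T) := by
  intro a ha
  have hcont : ContinuousOn (fun b => C * ω (min a b) (max a b) ^ q) (Icc 0 T) := by
    refine continuousOn_const.mul (ContinuousOn.rpow_const ?_ fun _ _ => Or.inr hq.le)
    exact hω.cont.comp (f := fun b => (min a b, max a b)) (by fun_prop) fun b hb =>
      ⟨le_min ha.1 hb.1, min_le_max, max_le ha.2 hb.2⟩
  have hlim := hcont a ha
  rw [ContinuousWithinAt, min_self, max_self, hω.zero ha.1 ha.2, Real.zero_rpow hq.ne',
    mul_zero] at hlim
  refine tendsto_iff_dist_tendsto_zero.mpr (squeeze_zero' (by simp) ?_ hlim)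
  filter_upwards [self_mem_nhdsWithin] with b hb
  rcases le_total a b with hab | hba
  · rw [dist_eq_norm, min_eq_left hab, max_eq_right hab]
    exact hf ha.1 hab hb.2
  · rw [dist_comm, dist_eq_norm, min_eq_right hba, max_eq_left hba]
    exact hf hb.1 hba ha.2

section Partition

variable {u : ℕ → ℝ}

lemma nonneg_of_monotone (hω : IsControl T ω) (hu : Monotone u) (huT : ∀ i, u i ∈ Icc 0 T)
    {i j : ℕ} (hij : i ≤ j) : 0 ≤ ω (u i) (u j) :=
  hω.nonneg (huT i).1 (hu hij) (huT j).2

lemma sum_le (hω : IsControl T ω) (hu : Monotone u) (huT : ∀ i, u i ∈ Icc 0 T) (N : ℕ) :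
    ∑ i ∈ Finset.range N, ω (u i) (u (i + 1)) ≤ ω (u 0) (u N) := by
  induction N with
  | zero => simp [hω.zero (huT 0).1 (huT 0).2]
  | succ N ih =>
    rw [Finset.sum_range_succ]
    linarith [hω.superadditive (huT 0).1 (hu N.zero_le) (hu N.le_succ) (huT (N + 1)).2]

lemma sum_rpow_le (hω : IsControl T ω) (hu : Monotone u) (huT : ∀ i, u i ∈ Icc 0 T) {θ ε : ℝ}
    (hθ : 1 ≤ θ) (hε : ∀ i, ω (u i) (u (i + 1)) ≤ ε) (N : ℕ) :
    ∑ i ∈ Finset.range N, ω (u i) (u (i + 1)) ^ θ ≤ ε ^ (θ - 1) * ω (u 0) (u N) := by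
  have hnonneg (i : ℕ) : 0 ≤ ω (u i) (u (i + 1)) := hω.nonneg_of_monotone hu huT i.le_succ
  have hε0 : 0 ≤ ε := (hnonneg 0).trans (hε 0)
  have hterm (i : ℕ) : ω (u i) (u (i + 1)) ^ θ ≤ ε ^ (θ - 1) * ω (u i) (u (i + 1)) := by
    calc ω (u i) (u (i + 1)) ^ θ
        = ω (u i) (u (i + 1)) ^ (θ - 1) * ω (u i) (u (i + 1)) := by
          rw [← Real.rpow_add_one' (hnonneg i) (by linarith), sub_add_cancel]
      _ ≤ ε ^ (θ - 1) * ω (u i) (u (i + 1)) := mul_le_mul_of_nonneg_right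
          (Real.rpow_le_rpow (hnonneg i) (hε i) (by linarith)) (hnonneg i)
  calc ∑ i ∈ Finset.range N, ω (u i) (u (i + 1)) ^ θ
      ≤ ∑ i ∈ Finset.range N, ε ^ (θ - 1) * ω (u i) (u (i + 1)) :=
        Finset.sum_le_sum fun i _ => hterm i
    _ = ε ^ (θ - 1) * ∑ i ∈ Finset.range N, ω (u i) (u (i + 1)) := by rw [Finset.mul_sum]
    _ ≤ ε ^ (θ - 1) * ω (u 0) (u N) :=
        mul_le_mul_of_nonneg_left (hω.sum_le hu huT N) (Real.rpow_nonneg hε0 _)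

lemma exists_le_half_and_le_half (hω : IsControl T ω) (hu : Monotone u)
    (huT : ∀ i, u i ∈ Icc 0 T) {a b : ℕ} (hab : a < b) :
    ∃ j, a ≤ j ∧ j < b ∧ ω (u a) (u j) ≤ ω (u a) (u b) / 2 ∧
      ω (u (j + 1)) (u b) ≤ ω (u a) (u b) / 2 := by
  have hnonneg := hω.nonneg_of_monotone hu huT hab.le
  by_contra! hlarge
  have hsmall (j : ℕ) (haj : a ≤ j) : j ≤ b → ω (u a) (u j) ≤ ω (u a) (u b) / 2 := by
    induction j, haj using Nat.le_induction with
    | base =>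
      intro _
      rw [hω.zero (huT a).1 (huT a).2]
      positivity
    | succ j haj ih =>
      intro hjb
      have := hω.superadditive (huT a).1 (hu (haj.trans j.le_succ)) (hu hjb) (huT b).2
      linarith [hlarge j haj hjb (ih (j.le_succ.trans hjb))]
  obtain ⟨c, rfl⟩ : ∃ c, b = c + 1 := ⟨b - 1, by lia⟩
  have := hlarge c (by lia) c.lt_succ_self (hsmall c (by lia) c.le_succ)
  rw [hω.zero (huT _).1 (huT _).2] at this
  linarith

end Partition

end IsControl

/-! ### The sewing lemma -/

section Sewing

open Set Filter Topology

variable {E : Type*} [NormedAddCommGroup E] {T θ K : ℝ} {ω : ℝ → ℝ → ℝ} {Ξ : ℝ → ℝ → E}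

/-- The two-parameter map `Ξ` is almost additive on `[0, T]`: its defect of additivity is bounded
by `K * ω ^ θ`. For `θ > 1` this is the hypothesis of the sewing lemma. -/
def IsAlmostAdditive (T : ℝ) (ω : ℝ → ℝ → ℝ) (θ K : ℝ) (Ξ : ℝ → ℝ → E) : Prop :=
  ∀ ⦃s t u : ℝ⦄, 0 ≤ s → s ≤ t → t ≤ u → u ≤ T → ‖Ξ s u - Ξ s t - Ξ t u‖ ≤ K * ω s u ^ θ

/-- The constant of the sewing lemma for the exponent `θ`, i.e. the solution `C` of
`2 * C * (1 / 2) ^ θ + 2 = C`; it is positive only for `θ > 1`. -/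
def sewingConst (θ : ℝ) : ℝ := 2 / (1 - 2 * (1 / 2) ^ θ)

lemma two_mul_half_rpow_lt_one (hθ : 1 < θ) : 2 * (1 / 2 : ℝ) ^ θ < 1 := by
  have := Real.rpow_lt_rpow_of_exponent_gt (x := 1 / 2) (by norm_num) (by norm_num) hθ
  rw [Real.rpow_one] at this
  linarith

lemma sewingConst_pos (hθ : 1 < θ) : 0 < sewingConst θ :=
  div_pos two_pos (sub_pos.mpr (two_mul_half_rpow_lt_one hθ))

lemma two_mul_sewingConst_mul_half_rpow_add_two (hθ : 1 < θ) :
    2 * sewingConst θ * (1 / 2) ^ θ + 2 = sewingConst θ := by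
  have hne : 1 - 2 * (1 / 2 : ℝ) ^ θ ≠ 0 := (sub_pos.mpr (two_mul_half_rpow_lt_one hθ)).ne'
  rw [sewingConst]
  linear_combination -2 * mul_inv_cancel₀ hne

lemma norm_sum_sub_sum_blocks_le {f g : ℕ → E} {b : ℕ → ℝ} (M N : ℕ)
    (h : ∀ i, ‖∑ j ∈ Finset.Ico (i * M) ((i + 1) * M), f j - g i‖ ≤ b i) :
    ‖∑ j ∈ Finset.range (N * M), f j - ∑ i ∈ Finset.range N, g i‖ ≤
      ∑ i ∈ Finset.range N, b i := by
  have hblocks : ∑ j ∈ Finset.range (N * M), f j =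
      ∑ i ∈ Finset.range N, ∑ j ∈ Finset.Ico (i * M) ((i + 1) * M), f j := by
    induction N with
    | zero => simp
    | succ N ih =>
      rw [Finset.sum_range_succ, ← ih,
        Finset.sum_range_add_sum_Ico _ (Nat.mul_le_mul_right M N.le_succ)]
  rw [hblocks, ← Finset.sum_sub_distrib]
  exact norm_sum_le_of_le _ fun i _ => h i

/-- The `i`-th point of the dyadic grid of mesh `T / 2 ^ n` on `[0, T]`, projected to `[s, t]`.
Projecting one fixed grid makes the Riemann sums over adjacent intervals comparable. -/
def dyadicPoint (T : ℝ) (n : ℕ) (s t : ℝ) (i : ℕ) : ℝ := max s (min t (i * (T / 2 ^ n)))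

section DyadicPoint

variable {s t u : ℝ}

lemma dyadicPoint_mem_Icc (n : ℕ) (hst : s ≤ t) (i : ℕ) : dyadicPoint T n s t i ∈ Icc s t :=
  ⟨le_max_left _ _, max_le hst (min_le_left _ _)⟩

lemma monotone_dyadicPoint (hT : 0 ≤ T) (n : ℕ) (s t : ℝ) : Monotone (dyadicPoint T n s t) := by
  intro i j hij
  unfold dyadicPoint
  gcongr

lemma dyadicPoint_zero (n : ℕ) (hs : 0 ≤ s) (hst : s ≤ t) : dyadicPoint T n s t 0 = s := by
  simp [dyadicPoint, hs, hs.trans hst]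

lemma dyadicPoint_two_pow (n : ℕ) (hst : s ≤ t) (ht : t ≤ T) :
    dyadicPoint T n s t (2 ^ n) = t := by
  have : (2 : ℝ) ^ n * (T / 2 ^ n) = T := by field_simp
  simp [dyadicPoint, this, ht, hst]

lemma dyadicPoint_add_mul_two_pow (n m : ℕ) (s t : ℝ) (i : ℕ) :
    dyadicPoint T (n + m) s t (i * 2 ^ m) = dyadicPoint T n s t i := by
  have : ((i * 2 ^ m : ℕ) : ℝ) * (T / 2 ^ (n + m)) = i * (T / 2 ^ n) := by
    push_cast
    rw [pow_add]
    field_simp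
  rw [dyadicPoint, dyadicPoint, this]

lemma dyadicPoint_succ_sub_le (hT : 0 ≤ T) (n : ℕ) (s t : ℝ) (i : ℕ) :
    dyadicPoint T n s t (i + 1) - dyadicPoint T n s t i ≤ T / 2 ^ n := by
  have hmesh : 0 ≤ T / 2 ^ n := by positivity
  unfold dyadicPoint
  push_cast
  grind

lemma min_dyadicPoint (n : ℕ) (hst : s ≤ t) (htu : t ≤ u) (i : ℕ) :
    min t (dyadicPoint T n s u i) = dyadicPoint T n s t i := by
  unfold dyadicPoint
  grind

lemma max_dyadicPoint (n : ℕ) (hst : s ≤ t) (i : ℕ) :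
    max t (dyadicPoint T n s u i) = dyadicPoint T n t u i := by
  unfold dyadicPoint
  grind

end DyadicPoint

lemma IsControl.eventually_dyadicPoint_lt (hω : IsControl T ω) {s t ε : ℝ} (hs : 0 ≤ s)
    (hst : s ≤ t) (ht : t ≤ T) (hε : 0 < ε) :
    ∀ᶠ n in atTop, ∀ i, ω (dyadicPoint T n s t i) (dyadicPoint T n s t (i + 1)) < ε := by
  have hT : 0 ≤ T := hs.trans (hst.trans ht)
  obtain ⟨δ, hδ, hδω⟩ := hω.exists_forall_sub_lt_imp_lt hε
  have hmesh : Tendsto (fun n : ℕ => T / 2 ^ n) atTop (𝓝 0) :=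
    tendsto_const_nhds.div_atTop (tendsto_pow_atTop_atTop_of_one_lt one_lt_two)
  filter_upwards [hmesh.eventually_lt_const hδ] with n hn i
  exact hδω (hs.trans (dyadicPoint_mem_Icc n hst i).1)
    (monotone_dyadicPoint hT n s t i.le_succ) ((dyadicPoint_mem_Icc n hst _).2.trans ht)
    ((dyadicPoint_succ_sub_le hT n s t i).trans_lt hn)

lemma IsControl.tendsto_sum_rpow_dyadicPoint (hω : IsControl T ω) (hθ : 1 < θ) {s t : ℝ}
    (hs : 0 ≤ s) (hst : s ≤ t) (ht : t ≤ T) :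
    Tendsto (fun n => ∑ i ∈ Finset.range (2 ^ n),
      ω (dyadicPoint T n s t i) (dyadicPoint T n s t (i + 1)) ^ θ) atTop (𝓝 0) := by
  have hT : 0 ≤ T := hs.trans (hst.trans ht)
  have hmono (n : ℕ) := monotone_dyadicPoint hT n s t
  have hmem (n i : ℕ) : dyadicPoint T n s t i ∈ Icc 0 T :=
    Icc_subset_Icc hs ht (dyadicPoint_mem_Icc n hst i)
  have hcoef : Tendsto (fun ε : ℝ => ε ^ (θ - 1) * ω s t) (𝓝[>] 0) (𝓝 0) := by
    refine ((Real.continuous_rpow_const (by linarith)).mul_const _).tendsto' 0 0 ?_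
      |>.mono_left nhdsWithin_le_nhds
    rw [Real.zero_rpow (by linarith), zero_mul]
  refine tendsto_order.mpr ⟨fun c hc => .of_forall fun n => hc.trans_le <|
    Finset.sum_nonneg fun i _ => Real.rpow_nonneg
      (hω.nonneg_of_monotone (hmono n) (hmem n) i.le_succ) _, fun c hc => ?_⟩
  obtain ⟨ε, hεc, hε⟩ := ((hcoef.eventually_lt_const hc).and self_mem_nhdsWithin).exists
  filter_upwards [hω.eventually_dyadicPoint_lt hs hst ht hε] with n hn
  have hsum := hω.sum_rpow_le (hmono n) (hmem n) hθ.le (fun i => (hn i).le) (2 ^ n)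
  rw [dyadicPoint_zero n hs hst, dyadicPoint_two_pow n hst ht] at hsum
  exact hsum.trans_lt hεc

/-- The Riemann sum of `Ξ` over the dyadic partition of `[s, t]` of mesh `T / 2 ^ n`. -/
def dyadicSum (T : ℝ) (Ξ : ℝ → ℝ → E) (n : ℕ) (s t : ℝ) : E :=
  ∑ i ∈ Finset.range (2 ^ n), Ξ (dyadicPoint T n s t i) (dyadicPoint T n s t (i + 1))

namespace IsAlmostAdditive

lemma apply_self (hΞ : IsAlmostAdditive T ω θ K Ξ) (hω : IsControl T ω) (hθ : θ ≠ 0) {s : ℝ}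
    (hs : 0 ≤ s) (hsT : s ≤ T) : Ξ s s = 0 := by
  simpa [hω.zero hs hsT, Real.zero_rpow hθ] using hΞ hs le_rfl le_rfl hsT

lemma norm_sum_sub_le_of_split (hΞ : IsAlmostAdditive T ω θ K Ξ) (hω : IsControl T ω)
    (hθ : 0 ≤ θ) (hK : 0 ≤ K) {u : ℕ → ℝ} (hu : Monotone u) (huT : ∀ i, u i ∈ Icc 0 T)
    {a j b : ℕ} (haj : a ≤ j) (hjb : j < b) {R R' : ℝ}
    (hleft : ‖∑ i ∈ Finset.Ico a j, Ξ (u i) (u (i + 1)) - Ξ (u a) (u j)‖ ≤ R)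
    (hright : ‖∑ i ∈ Finset.Ico (j + 1) b, Ξ (u i) (u (i + 1)) - Ξ (u (j + 1)) (u b)‖ ≤ R') :
    ‖∑ i ∈ Finset.Ico a b, Ξ (u i) (u (i + 1)) - Ξ (u a) (u b)‖ ≤
      R + R' + K * ω (u a) (u b) ^ θ + K * ω (u a) (u b) ^ θ := by
  have hdefect_a := hΞ (huT a).1 (hu haj) (hu hjb.le) (huT b).2
  have hdefect_j := (hΞ (huT j).1 (hu j.le_succ) (hu hjb) (huT b).2).trans
    (mul_le_mul_of_nonneg_left
      (hω.rpow_mono (huT a).1 (hu haj) (hu hjb.le) le_rfl (huT b).2 hθ) hK)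
  have hsplit : ∑ i ∈ Finset.Ico a b, Ξ (u i) (u (i + 1)) - Ξ (u a) (u b) =
      (∑ i ∈ Finset.Ico a j, Ξ (u i) (u (i + 1)) - Ξ (u a) (u j)) +
      (∑ i ∈ Finset.Ico (j + 1) b, Ξ (u i) (u (i + 1)) - Ξ (u (j + 1)) (u b)) -
      (Ξ (u a) (u b) - Ξ (u a) (u j) - Ξ (u j) (u b)) -
      (Ξ (u j) (u b) - Ξ (u j) (u (j + 1)) - Ξ (u (j + 1)) (u b)) := by
    rw [← Finset.sum_Ico_consecutive _ haj hjb.le, Finset.sum_eq_sum_Ico_succ_bot hjb]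
    abel
  rw [hsplit]
  exact norm_sub_le_of_le (norm_sub_le_of_le (norm_add_le_of_le hleft hright) hdefect_a) hdefect_j

lemma norm_sum_sub_le (hΞ : IsAlmostAdditive T ω θ K Ξ) (hω : IsControl T ω) (hθ : 1 < θ)
    (hK : 0 ≤ K) {u : ℕ → ℝ} (hu : Monotone u) (huT : ∀ i, u i ∈ Icc 0 T) {a b : ℕ}
    (hab : a ≤ b) :
    ‖∑ i ∈ Finset.Ico a b, Ξ (u i) (u (i + 1)) - Ξ (u a) (u b)‖ ≤
      sewingConst θ * K * ω (u a) (u b) ^ θ := by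
  induction hn : b - a using Nat.strong_induction_on generalizing a b with
  | _ n ih =>
  obtain rfl | hlt := hab.eq_or_lt
  · simp [hΞ.apply_self hω (by linarith) (huT a).1 (huT a).2, hω.zero (huT a).1 (huT a).2,
      Real.zero_rpow (show θ ≠ 0 by linarith)]
  obtain ⟨j, haj, hjb, hleft, hright⟩ := hω.exists_le_half_and_le_half hu huT hlt
  set W := ω (u a) (u b)
  have hW : 0 ≤ W := hω.nonneg_of_monotone hu huT hab
  have hC : 0 ≤ sewingConst θ * K := mul_nonneg (sewingConst_pos hθ).le hK
  have hhalf : (W / 2) ^ θ = W ^ θ * (1 / 2) ^ θ := by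
    rw [div_eq_mul_one_div, Real.mul_rpow hW (by norm_num)]
  have ih_of_le_half {c d : ℕ} (hcd : c ≤ d) (hlen : d - c < n) (hsmall : ω (u c) (u d) ≤ W / 2) :
      ‖∑ i ∈ Finset.Ico c d, Ξ (u i) (u (i + 1)) - Ξ (u c) (u d)‖ ≤
        sewingConst θ * K * (W ^ θ * (1 / 2) ^ θ) := by
    refine (ih _ hlen hcd rfl).trans (mul_le_mul_of_nonneg_left ?_ hC)
    rw [← hhalf]
    exact Real.rpow_le_rpow (hω.nonneg_of_monotone hu huT hcd) hsmall (by linarith)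
  calc ‖∑ i ∈ Finset.Ico a b, Ξ (u i) (u (i + 1)) - Ξ (u a) (u b)‖
      ≤ sewingConst θ * K * (W ^ θ * (1 / 2) ^ θ) + sewingConst θ * K * (W ^ θ * (1 / 2) ^ θ)
        + K * W ^ θ + K * W ^ θ :=
        hΞ.norm_sum_sub_le_of_split hω (by linarith) hK hu huT haj hjb
          (ih_of_le_half haj (by lia) hleft) (ih_of_le_half hjb (by lia) hright)
    _ = sewingConst θ * K * W ^ θ := by
        linear_combination K * W ^ θ * two_mul_sewingConst_mul_half_rpow_add_two hθ

lemma norm_sub_min_sub_max_le (hΞ : IsAlmostAdditive T ω θ K Ξ) (hω : IsControl T ω)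
    (hθ : θ ≠ 0) (hK : 0 ≤ K) {a b t : ℝ} (ha : 0 ≤ a) (hab : a ≤ b) (hb : b ≤ T)
    (ht : 0 ≤ t) (htT : t ≤ T) :
    ‖Ξ a b - Ξ (min t a) (min t b) - Ξ (max t a) (max t b)‖ ≤ K * ω a b ^ θ := by
  have hnonneg : 0 ≤ K * ω a b ^ θ := mul_nonneg hK (Real.rpow_nonneg (hω.nonneg ha hab hb) _)
  have hself : Ξ t t = 0 := hΞ.apply_self hω hθ ht htT
  rcases le_total b t with hbt | htb
  · have hat := hab.trans hbt
    simpa [hat, hbt, hself] using hnonneg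
  rcases le_total t a with hta | hat
  · simpa [hta, htb, hself] using hnonneg
  · simpa [hat, htb] using hΞ ha hat htb hb

section Dyadic

variable {s t : ℝ}

lemma norm_dyadicSum_sub_le (hΞ : IsAlmostAdditive T ω θ K Ξ) (hω : IsControl T ω)
    (hθ : 1 < θ) (hK : 0 ≤ K) (hs : 0 ≤ s) (hst : s ≤ t) (ht : t ≤ T) (n : ℕ) :
    ‖dyadicSum T Ξ n s t - Ξ s t‖ ≤ sewingConst θ * K * ω s t ^ θ := by
  have hyoung := hΞ.norm_sum_sub_le hω hθ hK
    (monotone_dyadicPoint (hs.trans (hst.trans ht)) n s t)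
    (fun i => Icc_subset_Icc hs ht (dyadicPoint_mem_Icc n hst i)) (Nat.zero_le (2 ^ n))
  rwa [← Finset.range_eq_Ico, dyadicPoint_zero n hs hst, dyadicPoint_two_pow n hst ht] at hyoung

lemma norm_dyadicSum_add_sub_le (hΞ : IsAlmostAdditive T ω θ K Ξ) (hω : IsControl T ω)
    (hθ : 1 < θ) (hK : 0 ≤ K) (hs : 0 ≤ s) (hst : s ≤ t) (ht : t ≤ T) (n m : ℕ) :
    ‖dyadicSum T Ξ (n + m) s t - dyadicSum T Ξ n s t‖ ≤
      sewingConst θ * K * ∑ i ∈ Finset.range (2 ^ n),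
        ω (dyadicPoint T n s t i) (dyadicPoint T n s t (i + 1)) ^ θ := by
  rw [Finset.mul_sum, dyadicSum, pow_add]
  refine norm_sum_sub_sum_blocks_le (2 ^ m) (2 ^ n) fun i => ?_
  have hyoung := hΞ.norm_sum_sub_le hω hθ hK
    (monotone_dyadicPoint (hs.trans (hst.trans ht)) (n + m) s t)
    (fun i => Icc_subset_Icc hs ht (dyadicPoint_mem_Icc (n + m) hst i))
    (Nat.mul_le_mul_right (2 ^ m) i.le_succ)
  simpa only [dyadicPoint_add_mul_two_pow] using hyoung

lemma cauchySeq_dyadicSum (hΞ : IsAlmostAdditive T ω θ K Ξ) (hω : IsControl T ω)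
    (hθ : 1 < θ) (hK : 0 ≤ K) (hs : 0 ≤ s) (hst : s ≤ t) (ht : t ≤ T) :
    CauchySeq fun n => dyadicSum T Ξ n s t := by
  refine cauchySeq_of_le_tendsto_0' (fun n => sewingConst θ * K * ∑ i ∈ Finset.range (2 ^ n),
    ω (dyadicPoint T n s t i) (dyadicPoint T n s t (i + 1)) ^ θ) (fun n m hnm => ?_) ?_
  · obtain ⟨d, rfl⟩ := Nat.exists_eq_add_of_le hnm
    rw [dist_comm, dist_eq_norm]
    exact hΞ.norm_dyadicSum_add_sub_le hω hθ hK hs hst ht n d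
  · simpa using (hω.tendsto_sum_rpow_dyadicPoint hθ hs hst ht).const_mul (sewingConst θ * K)

lemma tendsto_dyadicSum_defect (hΞ : IsAlmostAdditive T ω θ K Ξ) (hω : IsControl T ω)
    (hθ : 1 < θ) (hK : 0 ≤ K) {u : ℝ} (hs : 0 ≤ s) (hst : s ≤ t) (htu : t ≤ u) (hu : u ≤ T) :
    Tendsto (fun n => dyadicSum T Ξ n s u - dyadicSum T Ξ n s t - dyadicSum T Ξ n t u)
      atTop (𝓝 0) := by
  have hsu := hst.trans htu
  have hlim := (hω.tendsto_sum_rpow_dyadicPoint hθ hs hsu hu).const_mul K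
  rw [mul_zero] at hlim
  refine squeeze_zero_norm (fun n => ?_) hlim
  simp only [dyadicSum, ← Finset.sum_sub_distrib, Finset.mul_sum, ← min_dyadicPoint n hst htu,
    ← max_dyadicPoint n hst]
  exact norm_sum_le_of_le _ fun i _ => hΞ.norm_sub_min_sub_max_le hω (by linarith) hK
    (hs.trans (dyadicPoint_mem_Icc n hsu i).1)
    (monotone_dyadicPoint (hs.trans (hsu.trans hu)) n s u i.le_succ)
    ((dyadicPoint_mem_Icc n hsu _).2.trans hu) (hs.trans hst) (htu.trans hu)

end Dyadic

theorem exists_norm_sub_sub_le [CompleteSpace E] (hΞ : IsAlmostAdditive T ω θ K Ξ)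
    (hω : IsControl T ω) (hθ : 1 < θ) (hK : 0 ≤ K) :
    ∃ z : ℝ → E, z 0 = 0 ∧ ∀ ⦃s t⦄, 0 ≤ s → s ≤ t → t ≤ T →
      ‖z t - z s - Ξ s t‖ ≤ sewingConst θ * K * ω s t ^ θ := by
  have hconv (s t : ℝ) : 0 ≤ s → s ≤ t → t ≤ T →
      ∃ l, Tendsto (fun n => dyadicSum T Ξ n s t) atTop (𝓝 l) := fun hs hst ht =>
    cauchySeq_tendsto_of_complete (hΞ.cauchySeq_dyadicSum hω hθ hK hs hst ht)
  choose! I hI using hconv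
  have hadd {s t : ℝ} (hs : 0 ≤ s) (hst : s ≤ t) (ht : t ≤ T) : I 0 t - I 0 s = I s t :=
    sub_eq_zero.mp <| tendsto_nhds_unique
      (((hI 0 t le_rfl (hs.trans hst) ht).sub (hI 0 s le_rfl hs (hst.trans ht))).sub
        (hI s t hs hst ht))
      (hΞ.tendsto_dyadicSum_defect hω hθ hK le_rfl hs hst ht)
  refine ⟨fun t => I 0 t - I 0 0, sub_self _, fun s t hs hst ht => ?_⟩
  rw [sub_sub_sub_cancel_right, hadd hs hst ht]
  exact le_of_tendsto ((hI s t hs hst ht).sub_const _).norm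
    (.of_forall fun n => hΞ.norm_dyadicSum_sub_le hω hθ hK hs hst ht n)

end IsAlmostAdditive

end Sewing

/-! ### The germ of the rough integral -/

section Tensor

variable {n m : ℕ} {U V : Type*} [NormedAddCommGroup U] [NormedSpace ℝ U]
  [NormedAddCommGroup V] [NormedSpace ℝ V]

/-- `a ((I ⊗ b) X)`, where the curried map `a` acts on the tensor `(I ⊗ b) X` of `ℝ^n ⊗ U`. -/
def applyIdTensor (a : Euc n →L[ℝ] U →L[ℝ] V) (b : Euc m →L[ℝ] U)
    (X : EuclideanSpace ℝ (Fin n × Fin m)) : V :=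
  tapply (fun v w => a v (b w)) X

lemma applyIdTensor_add (a : Euc n →L[ℝ] U →L[ℝ] V) (b : Euc m →L[ℝ] U)
    (X Y : EuclideanSpace ℝ (Fin n × Fin m)) :
    applyIdTensor a b (X + Y) = applyIdTensor a b X + applyIdTensor a b Y := by
  simp [applyIdTensor, tapply, add_smul, Finset.sum_add_distrib]

lemma applyIdTensor_sub_applyIdTensor (a a' : Euc n →L[ℝ] U →L[ℝ] V) (b b' : Euc m →L[ℝ] U)
    (X : EuclideanSpace ℝ (Fin n × Fin m)) :
    applyIdTensor a b X - applyIdTensor a' b' X =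
      applyIdTensor (a - a') b X + applyIdTensor a' (b - b') X := by
  simp [applyIdTensor, tapply, ← Finset.sum_sub_distrib, ← Finset.sum_add_distrib, smul_sub]

lemma sum_smul_eb (v : Euc n) : ∑ i, v i • (eb i : Euc n) = v := by
  ext j
  simp [eb, Pi.single_apply]

lemma applyIdTensor_tensorE (a : Euc n →L[ℝ] U →L[ℝ] V) (b : Euc m →L[ℝ] U) (v : Euc n)
    (w : Euc m) : applyIdTensor a b (tensorE v w) = a v (b w) := by
  conv_rhs => rw [← sum_smul_eb v, ← sum_smul_eb w]
  simp only [applyIdTensor, tapply, tensorE, Fintype.sum_prod_type, map_sum, map_smul,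
    sum_apply, smul_apply, Finset.smul_sum]
  rw [Finset.sum_comm]
  refine Finset.sum_congr rfl fun j _ => Finset.sum_congr rfl fun i _ => ?_
  rw [smul_smul, mul_comm]
  rfl

lemma norm_eb (i : Fin n) : ‖(eb i : Euc n)‖ = 1 := by simp [eb]

lemma norm_applyIdTensor_le (a : Euc n →L[ℝ] U →L[ℝ] V) (b : Euc m →L[ℝ] U)
    (X : EuclideanSpace ℝ (Fin n × Fin m)) :
    ‖applyIdTensor a b X‖ ≤ n * m * (‖a‖ * ‖b‖ * ‖X‖) := by
  have hbasis (i : Fin n) (j : Fin m) : ‖a (eb i) (b (eb j))‖ ≤ ‖a‖ * ‖b‖ := by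
    simpa [norm_eb] using (a (eb i)).le_of_opNorm_le_of_le
      (a.le_opNorm_of_le (norm_eb i).le) (b.le_opNorm_of_le (norm_eb j).le)
  have hterm (q : Fin n × Fin m) :
      ‖X q • a (eb q.1) (b (eb q.2))‖ ≤ ‖a‖ * ‖b‖ * ‖X‖ := by
    rw [norm_smul, mul_comm]
    exact mul_le_mul (hbasis _ _) (PiLp.norm_apply_le X q) (norm_nonneg _) (by positivity)
  simpa [applyIdTensor, tapply] using
    norm_sum_le_of_le Finset.univ fun (q : Fin n × Fin m) _ => hterm q

end Tensor

lemma rpow_natCast_div {r : ℝ} (hr : 0 ≤ r) (n : ℕ) (p : ℝ) :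
    r ^ (n / p) = (r ^ (1 / p)) ^ n := by
  rw [← Real.rpow_mul_natCast hr, one_div_mul_eq_div]

section Controlled

open Set

variable {T p : ℝ} {k : ℕ} {ω : ℝ → ℝ → ℝ} {x : ℝ → Euc k}
  {XX : ℝ → ℝ → EuclideanSpace ℝ (Fin k × Fin k)}
  {V : Type*} [NormedAddCommGroup V] [NormedSpace ℝ V]

lemma IsRoughPath.norm_sub_le_of_remainder_le (hX : IsRoughPath T p ω x XX) (hω : IsControl T ω)
    (hp : 0 < p) {y : ℝ → V} {y' : ℝ → Euc k →L[ℝ] V} {C D : ℝ} {s t : ℝ} (hs : 0 ≤ s)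
    (hst : s ≤ t) (ht : t ≤ T) (hC : 0 ≤ C) (hD : ‖y' s‖ ≤ D)
    (hrem : ‖y t - y s - y' s (x t - x s)‖ ≤ C * ω s t ^ (2 / p)) :
    ‖y t - y s‖ ≤ (C * ω 0 T ^ (1 / p) + D) * ω s t ^ (1 / p) := by
  have hpow : ω s t ^ (2 / p) ≤ ω 0 T ^ (1 / p) * ω s t ^ (1 / p) := by
    have := hω.rpow_add_le hs hst ht (a := 1 / p) (b := 1 / p) (by positivity) (by positivity)
    rwa [← add_div, one_add_one_eq_two] at this
  calc ‖y t - y s‖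
      = ‖(y t - y s - y' s (x t - x s)) + y' s (x t - x s)‖ := by rw [sub_add_cancel]
    _ ≤ C * (ω 0 T ^ (1 / p) * ω s t ^ (1 / p)) + D * ω s t ^ (1 / p) :=
        norm_add_le_of_le (hrem.trans (mul_le_mul_of_nonneg_left hpow hC))
          ((y' s).le_of_opNorm_le_of_le hD (hX.bound_x hs hst ht))
    _ = (C * ω 0 T ^ (1 / p) + D) * ω s t ^ (1 / p) := by ring

lemma IsRoughPath.isCRP_of_bounds (hX : IsRoughPath T p ω x XX) (hω : IsControl T ω)
    (hp : 0 < p) {y : ℝ → V} {y' : ℝ → Euc k →L[ℝ] V} {C D : ℝ} (hC : 0 ≤ C)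
    (hrem : ∀ ⦃s t⦄, 0 ≤ s → s ≤ t → t ≤ T →
      ‖y t - y s - y' s (x t - x s)‖ ≤ C * ω s t ^ (2 / p))
    (hderiv : ∀ ⦃s t⦄, 0 ≤ s → s ≤ t → t ≤ T → ‖y' t - y' s‖ ≤ D * ω s t ^ (1 / p)) :
    IsCRP p ω x 0 T y y' := by
  have hy' : ContinuousOn y' (Icc 0 T) := hω.continuousOn_of_norm_sub_le (by positivity) hderiv
  obtain ⟨M, hM⟩ := isCompact_Icc.exists_bound_of_continuousOn hy'
  refine ⟨hω.continuousOn_of_norm_sub_le (by positivity) fun s t hs hst ht =>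
    hX.norm_sub_le_of_remainder_le hω hp hs hst ht hC (hM s ⟨hs, hst.trans ht⟩)
      (hrem hs hst ht), hy', max C D, fun s t hs hst ht => ⟨?_, ?_⟩⟩
  · exact (hrem hs hst ht).trans (mul_le_mul_of_nonneg_right (le_max_left _ _)
      (Real.rpow_nonneg (hω.nonneg hs hst ht) _))
  · exact (hderiv hs hst ht).trans (mul_le_mul_of_nonneg_right (le_max_right _ _)
      (Real.rpow_nonneg (hω.nonneg hs hst ht) _))

/-- `M` bounds every quantity attached to the controlled rough path `(y, y')` on `[0, T]`: the
path, its derivative and remainder, and the increments of both components. -/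
structure IsCRPBound (T p : ℝ) (ω : ℝ → ℝ → ℝ) (x : ℝ → Euc k) (y : ℝ → V)
    (y' : ℝ → Euc k →L[ℝ] V) (M : ℝ) : Prop where
  norm_le : ∀ ⦃s⦄, 0 ≤ s → s ≤ T → ‖y s‖ ≤ M
  norm_deriv_le : ∀ ⦃s⦄, 0 ≤ s → s ≤ T → ‖y' s‖ ≤ M
  norm_sub_le : ∀ ⦃s t⦄, 0 ≤ s → s ≤ t → t ≤ T → ‖y t - y s‖ ≤ M * ω s t ^ (1 / p)
  norm_deriv_sub_le : ∀ ⦃s t⦄, 0 ≤ s → s ≤ t → t ≤ T → ‖y' t - y' s‖ ≤ M * ω s t ^ (1 / p)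
  norm_remainder_le : ∀ ⦃s t⦄, 0 ≤ s → s ≤ t → t ≤ T →
    ‖y t - y s - y' s (x t - x s)‖ ≤ M * ω s t ^ (2 / p)

lemma IsCRP.exists_isCRPBound {y : ℝ → V} {y' : ℝ → Euc k →L[ℝ] V} (hy : IsCRP p ω x 0 T y y')
    (hX : IsRoughPath T p ω x XX) (hω : IsControl T ω) (hp : 0 < p) :
    ∃ M > 0, IsCRPBound T p ω x y y' M := by
  obtain ⟨hcont, hcont', C, hC⟩ := hy
  obtain ⟨A, hA⟩ := isCompact_Icc.exists_bound_of_continuousOn hcont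
  obtain ⟨D, hD⟩ := isCompact_Icc.exists_bound_of_continuousOn hcont'
  have hrem ⦃s t : ℝ⦄ (hs : 0 ≤ s) (hst : s ≤ t) (ht : t ≤ T) :
      ‖y t - y s - y' s (x t - x s)‖ ≤ |C| * ω s t ^ (2 / p) :=
    (hC hs hst ht).1.trans (mul_le_mul_of_nonneg_right (le_abs_self C)
      (Real.rpow_nonneg (hω.nonneg hs hst ht) _))
  obtain ⟨M, hM, hAM, hDM, hCM, hsubM⟩ : ∃ M, 0 < M ∧ A ≤ M ∧ D ≤ M ∧ |C| ≤ M ∧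
      |C| * ω 0 T ^ (1 / p) + D ≤ M :=
    ((Filter.eventually_gt_atTop _).and <| (Filter.eventually_ge_atTop _).and <|
      (Filter.eventually_ge_atTop _).and <| (Filter.eventually_ge_atTop _).and <|
      Filter.eventually_ge_atTop _).exists
  refine ⟨M, hM, fun s hs hsT => (hA s ⟨hs, hsT⟩).trans hAM,
    fun s hs hsT => (hD s ⟨hs, hsT⟩).trans hDM, fun s t hs hst ht => ?_,
    fun s t hs hst ht => ?_, fun s t hs hst ht => ?_⟩ <;>
    have hω_nonneg := hω.nonneg hs hst ht
  · exact (hX.norm_sub_le_of_remainder_le hω hp hs hst ht (abs_nonneg C)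
      (hD s ⟨hs, hst.trans ht⟩) (hrem hs hst ht)).trans (by gcongr)
  · exact (hC hs hst ht).2.trans (by gcongr; exact (le_abs_self C).trans hCM)
  · exact (hrem hs hst ht).trans (by gcongr)

end Controlled

section Integral

open Set

variable {T p : ℝ} {k : ℕ} {ω : ℝ → ℝ → ℝ} {x : ℝ → Euc k}
  {XX : ℝ → ℝ → EuclideanSpace ℝ (Fin k × Fin k)}
  {V Vt : Type*} [NormedAddCommGroup V] [NormedSpace ℝ V]
  [NormedAddCommGroup Vt] [NormedSpace ℝ Vt]
  {y : ℝ → V} {y' : ℝ → Euc k →L[ℝ] V} {α : ℝ → V →L[ℝ] Vt} {α' : ℝ → Euc k →L[ℝ] V →L[ℝ] Vt}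
  {A B : ℝ}

/-- The germ `α_s (y_t - y_s) + α'_s ((I ⊗ y'_s) 𝕏_{s,t})` of the rough integral `∫ α dy`. -/
def roughIntegralGerm (XX : ℝ → ℝ → EuclideanSpace ℝ (Fin k × Fin k)) (y : ℝ → V)
    (y' : ℝ → Euc k →L[ℝ] V) (α : ℝ → V →L[ℝ] Vt) (α' : ℝ → Euc k →L[ℝ] V →L[ℝ] Vt)
    (s t : ℝ) : Vt :=
  α s (y t - y s) + applyIdTensor (α' s) (y' s) (XX s t)

lemma IsRoughPath.roughIntegralGerm_defect (hX : IsRoughPath T p ω x XX) {s t u : ℝ}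
    (hs : 0 ≤ s) (hst : s ≤ t) (htu : t ≤ u) (hu : u ≤ T) :
    roughIntegralGerm XX y y' α α' s u - roughIntegralGerm XX y y' α α' s t -
        roughIntegralGerm XX y y' α α' t u =
      -(α t - α s - α' s (x t - x s)) (y u - y t)
        - α' s (x t - x s) (y u - y t - y' s (x u - x t))
        - (applyIdTensor (α' t) (y' t) (XX t u) - applyIdTensor (α' s) (y' s) (XX t u)) := by
  simp only [roughIntegralGerm, hX.chen hs hst htu hu, applyIdTensor_add, applyIdTensor_tensorE,
    map_sub, sub_apply]
  abel

namespace IsCRPBound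

lemma nonneg (hy : IsCRPBound T p ω x y y' B) {s : ℝ} (hs : 0 ≤ s) (hsT : s ≤ T) : 0 ≤ B :=
  (norm_nonneg _).trans (hy.norm_le hs hsT)

lemma norm_sub_sub_deriv_left_le (hy : IsCRPBound T p ω x y y' B) (hX : IsRoughPath T p ω x XX)
    (hω : IsControl T ω) (hp : 0 < p) {s t u : ℝ} (hs : 0 ≤ s) (hst : s ≤ t) (htu : t ≤ u)
    (hu : u ≤ T) : ‖y u - y t - y' s (x u - x t)‖ ≤ 2 * B * ω s u ^ (2 / p) := by
  have ht := hs.trans hst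
  have htT := htu.trans hu
  have hB := hy.nonneg ht htT
  have hst_le : ω s t ^ (1 / p) ≤ ω s u ^ (1 / p) :=
    hω.rpow_mono hs le_rfl hst htu hu (by positivity)
  have htu_le {q : ℝ} (hq : 0 ≤ q) : ω t u ^ q ≤ ω s u ^ q :=
    hω.rpow_mono hs hst htu le_rfl hu hq
  have hrem : ‖y u - y t - y' t (x u - x t)‖ ≤ B * ω s u ^ (2 / p) :=
    (hy.norm_remainder_le ht htu hu).trans
      (mul_le_mul_of_nonneg_left (htu_le (by positivity)) hB)
  have hderiv : ‖(y' t - y' s) (x u - x t)‖ ≤ B * ω s u ^ (1 / p) * ω s u ^ (1 / p) :=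
    ContinuousLinearMap.le_of_opNorm_le_of_le _
      ((hy.norm_deriv_sub_le hs hst htT).trans (mul_le_mul_of_nonneg_left hst_le hB))
      ((hX.bound_x ht htu hu).trans (htu_le (by positivity)))
  have hsq : ω s u ^ (2 / p) = (ω s u ^ (1 / p)) ^ 2 :=
    mod_cast rpow_natCast_div (hω.nonneg hs (hst.trans htu) hu) 2 p
  calc ‖y u - y t - y' s (x u - x t)‖
      = ‖(y u - y t - y' t (x u - x t)) + (y' t - y' s) (x u - x t)‖ := by
        rw [sub_apply, sub_add_sub_cancel]
    _ ≤ B * ω s u ^ (2 / p) + B * ω s u ^ (1 / p) * ω s u ^ (1 / p) :=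
        norm_add_le_of_le hrem hderiv
    _ = 2 * B * ω s u ^ (2 / p) := by rw [hsq]; ring

lemma norm_applyIdTensor_sub_applyIdTensor_le (hα : IsCRPBound T p ω x α α' A)
    (hy : IsCRPBound T p ω x y y' B) {s t : ℝ} (hs : 0 ≤ s) (hst : s ≤ t) (ht : t ≤ T)
    (X : EuclideanSpace ℝ (Fin k × Fin k)) :
    ‖applyIdTensor (α' t) (y' t) X - applyIdTensor (α' s) (y' s) X‖ ≤
      2 * (k * k) * (A * B) * ω s t ^ (1 / p) * ‖X‖ := by
  have hA := hα.nonneg hs (hst.trans ht)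
  have hα_sub := hα.norm_deriv_sub_le hs hst ht
  have hα_sub_nonneg := (norm_nonneg _).trans hα_sub
  calc ‖applyIdTensor (α' t) (y' t) X - applyIdTensor (α' s) (y' s) X‖
      ≤ k * k * (‖α' t - α' s‖ * ‖y' t‖ * ‖X‖) + k * k * (‖α' s‖ * ‖y' t - y' s‖ * ‖X‖) := by
        rw [applyIdTensor_sub_applyIdTensor]
        exact norm_add_le_of_le (norm_applyIdTensor_le _ _ _) (norm_applyIdTensor_le _ _ _)
    _ ≤ k * k * (A * ω s t ^ (1 / p) * B * ‖X‖) + k * k * (A * (B * ω s t ^ (1 / p)) * ‖X‖) := by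
        gcongr
        exacts [hy.norm_deriv_le (hs.trans hst) ht, hα.norm_deriv_le hs (hst.trans ht),
          hy.norm_deriv_sub_le hs hst ht]
    _ = 2 * (k * k) * (A * B) * ω s t ^ (1 / p) * ‖X‖ := by ring

lemma isAlmostAdditive_roughIntegralGerm (hα : IsCRPBound T p ω x α α' A)
    (hy : IsCRPBound T p ω x y y' B) (hX : IsRoughPath T p ω x XX) (hω : IsControl T ω)
    (hp : 0 < p) :
    IsAlmostAdditive T ω (3 / p) (A * B * (3 + 2 * (k * k))) (roughIntegralGerm XX y y' α α') := by
  intro s t u hs hst htu hu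
  have ht := hs.trans hst
  have htT := htu.trans hu
  have hsT := hst.trans htT
  have hA := hα.nonneg hs hsT
  have hB := hy.nonneg hs hsT
  set r := ω s u ^ (1 / p)
  have hr : 0 ≤ r := Real.rpow_nonneg (hω.nonneg hs (hst.trans htu) hu) _
  have hpow (n : ℕ) : ω s u ^ (n / p) = r ^ n :=
    rpow_natCast_div (hω.nonneg hs (hst.trans htu) hu) n p
  have hpow2 : ω s u ^ (2 / p) = r ^ 2 := mod_cast hpow 2
  have hpow3 : ω s u ^ (3 / p) = r ^ 3 := mod_cast hpow 3
  have hst1 : ω s t ^ (1 / p) ≤ r := hω.rpow_mono hs le_rfl hst htu hu (by positivity)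
  have htu1 : ω t u ^ (1 / p) ≤ r := hω.rpow_mono hs hst htu le_rfl hu (by positivity)
  have hst2 : ω s t ^ (2 / p) ≤ r ^ 2 :=
    (hω.rpow_mono hs le_rfl hst htu hu (by positivity)).trans_eq hpow2
  have htu2 : ω t u ^ (2 / p) ≤ r ^ 2 :=
    (hω.rpow_mono hs hst htu le_rfl hu (by positivity)).trans_eq hpow2
  have hremα : ‖(α t - α s - α' s (x t - x s)) (y u - y t)‖ ≤ A * r ^ 2 * (B * r) :=
    ContinuousLinearMap.le_of_opNorm_le_of_le _
      ((hα.norm_remainder_le hs hst htT).trans (by gcongr))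
      ((hy.norm_sub_le ht htu hu).trans (by gcongr))
  have hremy : ‖α' s (x t - x s) (y u - y t - y' s (x u - x t))‖ ≤ A * r * (2 * B * r ^ 2) :=
    ContinuousLinearMap.le_of_opNorm_le_of_le _
      ((α' s).le_of_opNorm_le_of_le (hα.norm_deriv_le hs hsT) ((hX.bound_x hs hst htT).trans hst1))
      (hpow2 ▸ hy.norm_sub_sub_deriv_left_le hX hω hp hs hst htu hu)
  have htensor : ‖applyIdTensor (α' t) (y' t) (XX t u) - applyIdTensor (α' s) (y' s) (XX t u)‖ ≤
      2 * (k * k) * (A * B) * r * r ^ 2 :=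
    (hα.norm_applyIdTensor_sub_applyIdTensor_le hy hs hst htT _).trans
      (by gcongr; exact (hX.bound_XX ht htu hu).trans htu2)
  rw [hX.roughIntegralGerm_defect hs hst htu hu, hpow3]
  refine (norm_sub_le_of_le (norm_sub_le_of_le ((norm_neg _).trans_le hremα) hremy)
    htensor).trans_eq ?_
  ring

lemma norm_roughIntegralGerm_sub_le (hα : IsCRPBound T p ω x α α' A)
    (hy : IsCRPBound T p ω x y y' B) (hX : IsRoughPath T p ω x XX) {s t : ℝ} (hs : 0 ≤ s)
    (hst : s ≤ t) (ht : t ≤ T) :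
    ‖roughIntegralGerm XX y y' α α' s t - α s (y' s (x t - x s))‖ ≤
      A * B * (1 + k * k) * ω s t ^ (2 / p) := by
  have hsT := hst.trans ht
  have hA := hα.nonneg hs hsT
  have hB := hy.nonneg hs hsT
  have hrem : ‖α s (y t - y s - y' s (x t - x s))‖ ≤ A * (B * ω s t ^ (2 / p)) :=
    (α s).le_of_opNorm_le_of_le (hα.norm_le hs hsT) (hy.norm_remainder_le hs hst ht)
  have htensor : ‖applyIdTensor (α' s) (y' s) (XX s t)‖ ≤
      k * k * (A * B * ω s t ^ (2 / p)) := by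
    refine (norm_applyIdTensor_le _ _ _).trans ?_
    gcongr
    exacts [hα.norm_deriv_le hs hsT, hy.norm_deriv_le hs hsT, hX.bound_XX hs hst ht]
  rw [roughIntegralGerm, add_sub_right_comm, ← map_sub]
  refine (norm_add_le_of_le hrem htensor).trans_eq ?_
  ring

lemma norm_comp_sub_comp_le (hα : IsCRPBound T p ω x α α' A) (hy : IsCRPBound T p ω x y y' B)
    {s t : ℝ} (hs : 0 ≤ s) (hst : s ≤ t) (ht : t ≤ T) :
    ‖(α t).comp (y' t) - (α s).comp (y' s)‖ ≤ 2 * (A * B) * ω s t ^ (1 / p) := by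
  have hA := hα.nonneg hs (hst.trans ht)
  have hsplit : (α t).comp (y' t) - (α s).comp (y' s) =
      (α t).comp (y' t - y' s) + (α t - α s).comp (y' s) := by
    rw [ContinuousLinearMap.comp_sub, ContinuousLinearMap.sub_comp, sub_add_sub_cancel]
  calc ‖(α t).comp (y' t) - (α s).comp (y' s)‖
      ≤ ‖α t‖ * ‖y' t - y' s‖ + ‖α t - α s‖ * ‖y' s‖ := by
        rw [hsplit]
        exact norm_add_le_of_le (ContinuousLinearMap.opNorm_comp_le _ _)
          (ContinuousLinearMap.opNorm_comp_le _ _)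
    _ ≤ A * (B * ω s t ^ (1 / p)) + A * ω s t ^ (1 / p) * B := by
        have hα_nonneg := (norm_nonneg _).trans (hα.norm_sub_le hs hst ht)
        gcongr
        exacts [hα.norm_le (hs.trans hst) ht, hy.norm_deriv_sub_le hs hst ht,
          hα.norm_sub_le hs hst ht, hy.norm_deriv_le hs (hst.trans ht)]
    _ = 2 * (A * B) * ω s t ^ (1 / p) := by ring

lemma isCRP_of_norm_sub_roughIntegralGerm_le (hα : IsCRPBound T p ω x α α' A)
    (hy : IsCRPBound T p ω x y y' B) (hX : IsRoughPath T p ω x XX) (hω : IsControl T ω)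
    (hp : 0 < p) (hT : 0 ≤ T) {z : ℝ → Vt} {C : ℝ} (hC : 0 ≤ C)
    (hz : ∀ ⦃s t⦄, 0 ≤ s → s ≤ t → t ≤ T →
      ‖z t - z s - roughIntegralGerm XX y y' α α' s t‖ ≤ C * ω s t ^ (3 / p)) :
    IsCRP p ω x 0 T z (fun s => (α s).comp (y' s)) := by
  have hA := hα.nonneg le_rfl hT
  have hB := hy.nonneg le_rfl hT
  have hω0T := hω.nonneg le_rfl hT le_rfl
  refine hX.isCRP_of_bounds hω hp (C := C * ω 0 T ^ (1 / p) + A * B * (1 + k * k))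
    (by positivity) (fun s t hs hst ht => ?_) fun s t hs hst ht =>
      hα.norm_comp_sub_comp_le hy hs hst ht
  have hpow : ω s t ^ (3 / p) ≤ ω 0 T ^ (1 / p) * ω s t ^ (2 / p) := by
    have := hω.rpow_add_le hs hst ht (a := 1 / p) (b := 2 / p) (by positivity) (by positivity)
    rwa [← add_div, show (1 : ℝ) + 2 = 3 by norm_num] at this
  calc ‖z t - z s - α s (y' s (x t - x s))‖
      = ‖(z t - z s - roughIntegralGerm XX y y' α α' s t) +
          (roughIntegralGerm XX y y' α α' s t - α s (y' s (x t - x s)))‖ := by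
        rw [sub_add_sub_cancel]
    _ ≤ C * (ω 0 T ^ (1 / p) * ω s t ^ (2 / p)) + A * B * (1 + k * k) * ω s t ^ (2 / p) :=
        norm_add_le_of_le ((hz hs hst ht).trans (mul_le_mul_of_nonneg_left hpow hC))
          (hα.norm_roughIntegralGerm_sub_le hy hX hs hst ht)
    _ = (C * ω 0 T ^ (1 / p) + A * B * (1 + k * k)) * ω s t ^ (2 / p) := by ring

end IsCRPBound

theorem exists_rough_integral_controlled_integrand_general [CompleteSpace Vt] (hT : 0 ≤ T)
    (hp : 0 < p) (hp3 : p < 3) (hω : IsControl T ω) (hX : IsRoughPath T p ω x XX)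
    (hy : IsCRP p ω x 0 T y y') (hα : IsCRP p ω x 0 T α α') :
    ∃ z : ℝ → Vt, ContinuousOn z (Icc 0 T) ∧ z 0 = 0 ∧
      (∃ C : ℝ, 0 < C ∧ ∀ ⦃s t : ℝ⦄, 0 ≤ s → s ≤ t → t ≤ T →
        ‖z t - z s - α s (y t - y s) - tapply (fun w v => α' s w (y' s v)) (XX s t)‖
          ≤ C * ω s t ^ (3 / p)) ∧
      IsCRP p ω x 0 T z (fun s => (α s).comp (y' s)) := by
  have hθ : 1 < 3 / p := (one_lt_div hp).mpr hp3
  obtain ⟨A, hA, hαA⟩ := hα.exists_isCRPBound hX hω hp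
  obtain ⟨B, hB, hyB⟩ := hy.exists_isCRPBound hX hω hp
  have hK : 0 < A * B * (3 + 2 * (k * k)) := by positivity
  obtain ⟨z, hz0, hz⟩ :=
    (hαA.isAlmostAdditive_roughIntegralGerm hyB hX hω hp).exists_norm_sub_sub_le hω hθ hK.le
  have hC := mul_pos (sewingConst_pos hθ) hK
  have hzCRP := hαA.isCRP_of_norm_sub_roughIntegralGerm_le hyB hX hω hp hT hC.le hz
  refine ⟨z, hzCRP.1, hz0, ⟨_, hC, fun s t hs hst ht => ?_⟩, hzCRP⟩
  rw [sub_sub]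
  exact hz hs hst ht

end Integral

/-- **Integration of a controlled integrand against a controlled path.**
Given a `V`-valued controlled rough path `(y, y')` and an `L(V,Ṽ)`-valued controlled rough
path `(α, α')` (with `α'_s ∈ L(W ⊗ V, Ṽ)` in curried form), there is a continuous
`z : [0,T] → Ṽ` with `z 0 = 0` such that
`z_t − z_s − α_s (y_t − y_s) − α'_s ((I ⊗ y'_s) 𝕏_{s,t}) = O(ω(s,t)^{3/p})`; moreover,
with `z'_s := α_s ∘ y'_s`, the pair `(z, z')` is a `Ṽ`-valued rough path controlled by `X`. -/
theorem exists_rough_integral_controlled_integrand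
    {T p : ℝ} (hT : 0 < T) (hp1 : 1 ≤ p) (hp3 : p < 3) {k : ℕ} (hk : 1 ≤ k)
    {ω : ℝ → ℝ → ℝ} (hω : IsControl T ω)
    {x : ℝ → Euc k} {XX : ℝ → ℝ → EuclideanSpace ℝ (Fin k × Fin k)}
    (hX : IsRoughPath T p ω x XX)
    {V Vt : Type*} [NormedAddCommGroup V] [NormedSpace ℝ V] [CompleteSpace V]
    [NormedAddCommGroup Vt] [NormedSpace ℝ Vt] [CompleteSpace Vt]
    {y : ℝ → V} {y' : ℝ → Euc k →L[ℝ] V} (hy : IsCRP p ω x 0 T y y')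
    {α : ℝ → V →L[ℝ] Vt} {α' : ℝ → Euc k →L[ℝ] V →L[ℝ] Vt}
    (hα : IsCRP p ω x 0 T α α') :
    ∃ z : ℝ → Vt, ContinuousOn z (Set.Icc 0 T) ∧ z 0 = 0 ∧
      (∃ C : ℝ, 0 < C ∧ ∀ ⦃s t : ℝ⦄, 0 ≤ s → s ≤ t → t ≤ T →
        ‖z t - z s - α s (y t - y s) - tapply (fun w v => α' s w (y' s v)) (XX s t)‖
          ≤ C * ω s t ^ (3 / p)) ∧
      IsCRP p ω x 0 T z (fun s => (α s).comp (y' s)) := by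
  exact exists_rough_integral_controlled_integrand_general hT.le (by linarith) hp3 hω hX hy hα
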